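/- Let n ≥ 1 and let f : 𝕋 → ℂ be n-times differentiable on 𝕋. Then the n-th divided difference f^{[n]} : 𝕋^{n+1} → ℂ is a symmetric function of its n+1 variables: for every permutation σ of {1,…,n+1} and every (λ₁,…,λ_{n+1}) ∈ 𝕋^{n+1}, f^{[n]}(λ_{σ(1)},…,λ_{σ(n+1)}) = f^{[n]}(λ₁,…,λ_{n+1}). -/

import Mathlib

/-!
Writing `h^{[1]}(x, y)` for the first divided difference of `h`, the recursion says that
`f^{[n]}(x, y, w) = h^{[1]}(x, y)` with `h = f^{[n-1]}(·, w)`, so the symmetry of `h^{[1]}` exchanges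
the first two variables. Similarly, the exchange of the second and third variables is the identity
`h^{[2]}(x, y, z) = h^{[2]}(x, z, y)` for `h = f^{[n-2]}(·, w)`. This is algebra for distinct points;
in the confluent cases it needs only that `h` be differentiable once (`step_step_comm`).

The analytic content is thus that `f^{[k]}(·, w)` is differentiable on the circle for `k < n`
(`dd_differentiable`), by strong induction on `k`. At a point `a` that differs from some entry `c`
of `w`, symmetry at lower order moves `c` to the front and makes the function a quotient with
denominator `x - c`. If `w = (a, …, a)`, Taylor's theorem with Peano remainder
(`CircleDiffOn.taylorAt`) gives `f` an expansion of order `k + 1` at `a`, and every divided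
difference against `a` removes one order from the expansion (`TaylorAt.step`). An expansion of
order one is differentiability.
-/

open Filter Topology
open scoped Classical

noncomputable section

/-- The unit circle 𝕋 ⊆ ℂ. -/
def circleT : Set ℂ := {z : ℂ | ‖z‖ = 1}

/-- Derivative along the circle (derivative within 𝕋). -/
def cderiv (f : ℂ → ℂ) : ℂ → ℂ := fun z => derivWithin f circleT z

/-- `f` is `n`-times differentiable on 𝕋 (no continuity of the top derivative assumed). -/
def CircleDiffOn (n : ℕ) (f : ℂ → ℂ) : Prop :=
  ∀ k < n, ∀ z ∈ circleT, DifferentiableWithinAt ℂ (cderiv^[k] f) circleT z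

/-- Divided differences `f^{[n]}` of a function on 𝕋. -/
def divDiff (f : ℂ → ℂ) : (n : ℕ) → (Fin (n + 1) → ℂ) → ℂ
  | 0 => fun v => f (v 0)
  | n + 1 => fun v =>
      if v 0 = v 1 then
        cderiv (fun z => divDiff f n (Fin.cons z fun i => v i.succ.succ)) (v 0)
      else
        (divDiff f n (Fin.cons (v 0) fun i => v i.succ.succ)
          - divDiff f n (Fin.cons (v 1) fun i => v i.succ.succ)) / (v 0 - v 1)

/-! ### Derivatives along the circle -/

lemma norm_of_mem {a : ℂ} (ha : a ∈ circleT) : ‖a‖ = 1 := ha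

lemma ne_zero_of_mem {a : ℂ} (ha : a ∈ circleT) : a ≠ 0 := by
  rintro rfl
  simpa using norm_of_mem ha

lemma uniqueDiff {a : ℂ} (ha : a ∈ circleT) : UniqueDiffWithinAt ℂ circleT a := by
  have h1 : circleT = Metric.sphere (0 : ℂ) 1 := by ext z; simp [circleT]
  rw [uniqueDiffWithinAt_iff_accPt]
  refine IsPreconnected.preperfect_of_nontrivial (U := circleT) ?_ ?_ a ha
  · exact ⟨1, by simp [circleT], -1, by simp [circleT], by norm_num⟩
  · rw [h1]
    exact isPreconnected_sphere (by simp [Complex.rank_real_complex]) 0 1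

lemma cderiv_eq {h : ℂ → ℂ} {a d : ℂ} (ha : a ∈ circleT) (hd : HasDerivWithinAt h d circleT a) :
    cderiv h a = d := hd.derivWithin (uniqueDiff ha)

lemma cderiv_congr {h k : ℂ → ℂ} {a : ℂ} (ha : a ∈ circleT) (hk : Set.EqOn h k circleT) :
    cderiv h a = cderiv k a := derivWithin_congr hk (hk ha)

/-! ### The first divided difference and its iterates -/

/-- The first divided difference `x ↦ h^{[1]}(x, y)` of `h` on the circle. -/
def step (h : ℂ → ℂ) (y x : ℂ) : ℂ :=
  if x = y then cderiv h x else (h x - h y) / (x - y)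

/-- The divided difference with the first variable singled out and the remaining ones collected
in a list: `dd f [λ₂, …, λₙ₊₁] λ₁ = f^{[n]}(λ₁, …, λₙ₊₁)`. -/
def dd (f : ℂ → ℂ) : List ℂ → ℂ → ℂ
  | [] => f
  | y :: l => step (dd f l) y

lemma divDiff_eq_dd (f : ℂ → ℂ) (n : ℕ) (v : Fin (n + 1) → ℂ) :
    divDiff f n v = dd f (List.ofFn fun i : Fin n => v i.succ) (v 0) := by
  induction n with
  | zero => simp [divDiff, dd]
  | succ n ih =>
    simp only [divDiff, ih, List.ofFn_succ, dd, step, Fin.cons_zero, Fin.cons_succ]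
    rfl

lemma step_self (h : ℂ → ℂ) (a : ℂ) : step h a a = cderiv h a := if_pos rfl

lemma step_of_ne (h : ℂ → ℂ) {x y : ℂ} (hxy : x ≠ y) :
    step h y x = (h x - h y) / (x - y) := if_neg hxy

lemma step_comm (h : ℂ → ℂ) (x y : ℂ) : step h y x = step h x y := by
  by_cases hxy : x = y
  · rw [hxy]
  · rw [step_of_ne h hxy, step_of_ne h (Ne.symm hxy), ← neg_sub (h y), ← neg_sub y, neg_div_neg_eq]

lemma step_congr {h k : ℂ → ℂ} {y : ℂ} (hy : y ∈ circleT) (hk : Set.EqOn h k circleT) :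
    Set.EqOn (step h y) (step k y) circleT := by
  intro x hx
  simp only [step, cderiv_congr hx hk, hk hx, hk hy]

lemma step_hasDeriv {h : ℂ → ℂ} {y a d : ℂ} (hd : HasDerivWithinAt h d circleT a) (hay : a ≠ y) :
    HasDerivWithinAt (step h y) (d / (a - y) - (h a - h y) / (a - y) ^ 2) circleT a := by
  have hne : a - y ≠ 0 := sub_ne_zero.mpr hay
  have h1 : HasDerivWithinAt (fun x => (h x - h y) / (x - y))
      ((d * (a - y) - (h a - h y) * 1) / (a - y) ^ 2) circleT a :=
    (hd.sub_const _).div ((hasDerivWithinAt_id a circleT).sub_const y) hne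
  have h2 : (d * (a - y) - (h a - h y) * 1) / (a - y) ^ 2
      = d / (a - y) - (h a - h y) / (a - y) ^ 2 := by field_simp
  rw [h2] at h1
  refine h1.congr_of_eventuallyEq ?_ (step_of_ne h hay)
  have : ∀ᶠ x in 𝓝[circleT] a, x ≠ y := (eventually_ne_nhds hay).filter_mono nhdsWithin_le_nhds
  filter_upwards [this] with x hx using step_of_ne h hx

/-- The confluent case of the exchange of two divided differences, which uses the derivative of `h`
at `a` only. -/
lemma step_step_self {h : ℂ → ℂ} {y a : ℂ} (ha : a ∈ circleT)
    (hd : DifferentiableWithinAt ℂ h circleT a) (hay : a ≠ y) :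
    step (step h y) a a = step (step h a) y a := by
  have hne : a - y ≠ 0 := sub_ne_zero.mpr hay
  rw [step_self, cderiv_eq ha (step_hasDeriv hd.hasDerivWithinAt hay), step_of_ne _ hay, step_self,
    step_comm h y a, step_of_ne _ hay, cderiv]
  field_simp

lemma step_step_comm {h : ℂ → ℂ} (hd : DifferentiableOn ℂ h circleT) {x : ℂ} (hx : x ∈ circleT)
    (y z : ℂ) : step (step h y) z x = step (step h z) y x := by
  by_cases hyz : y = z
  · rw [hyz]
  by_cases hxy : x = y
  · subst hxy
    exact (step_step_self hx (hd x hx) hyz).symm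
  by_cases hxz : x = z
  · subst hxz
    exact step_step_self hx (hd x hx) hxy
  rw [step_of_ne _ hxz, step_of_ne _ hxy, step_of_ne _ hxy, step_of_ne _ hxz,
    step_of_ne _ (Ne.symm hyz), step_of_ne _ hyz]
  have h1 := sub_ne_zero.mpr hxy
  have h2 := sub_ne_zero.mpr hxz
  have h3 := sub_ne_zero.mpr hyz
  have h4 := sub_ne_zero.mpr (Ne.symm hyz)
  field_simp
  ring

/-- Symmetry of the divided difference in all variables but the first, given differentiability of
the divided differences of order at least two less. -/
lemma dd_perm {f : ℂ → ℂ} {N : ℕ}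
    (hD : ∀ m : List ℂ, m.length + 2 ≤ N → (∀ y ∈ m, y ∈ circleT) →
      DifferentiableOn ℂ (dd f m) circleT)
    {l l' : List ℂ} (hp : l.Perm l') (hl : l.length ≤ N) (hT : ∀ y ∈ l, y ∈ circleT) :
    Set.EqOn (dd f l) (dd f l') circleT := by
  induction hp with
  | nil => exact fun _ _ => rfl
  | cons x _ ih =>
    simp only [List.length_cons, List.forall_mem_cons] at hl hT
    exact step_congr hT.1 (ih (by lia) hT.2)
  | swap x y m =>
    simp only [List.length_cons, List.forall_mem_cons] at hl hT
    exact fun z hz => step_step_comm (hD m hl hT.2.2) hz x y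
  | trans hp₁ _ ih₁ ih₂ =>
    exact (ih₁ hl hT).trans
      (ih₂ (hp₁.length_eq ▸ hl) fun y hy => hT y (hp₁.mem_iff.mpr hy))

/-! ### Taylor expansions on the circle -/

/-- `h` has a Taylor expansion with Peano remainder of order `m` at `a`, along the circle. The
polynomial is not required to have degree at most `m`. -/
def TaylorAt (a : ℂ) (m : ℕ) (h : ℂ → ℂ) : Prop :=
  ∃ p : Polynomial ℂ,
    (fun x => h x - p.eval (x - a)) =o[𝓝[circleT] a] fun x => (x - a) ^ m

lemma poly_hasDeriv (p : Polynomial ℂ) (a x : ℂ) :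
    HasDerivAt (fun x => p.eval (x - a)) (p.derivative.eval (x - a)) x := by
  have h1 := (p.hasDerivAt (x - a)).comp x ((hasDerivAt_id x).sub_const a)
  rw [mul_one] at h1
  exact h1

lemma value_and_deriv {a : ℂ} (ha : a ∈ circleT) {m : ℕ} {h : ℂ → ℂ} {p : Polynomial ℂ}
    (hp : (fun x => h x - p.eval (x - a)) =o[𝓝[circleT] a] fun x => (x - a) ^ (m + 1)) :
    h a = p.coeff 0 ∧ HasDerivWithinAt h (p.coeff 1) circleT a := by
  have h0 : h a = p.coeff 0 := by
    have := (hp.def one_pos).self_of_nhdsWithin ha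
    simpa [sub_eq_zero, ← Polynomial.coeff_zero_eq_eval_zero] using this
  refine ⟨h0, ?_⟩
  have hO : (fun x : ℂ => (x - a) ^ (m + 1)) =O[𝓝[circleT] a] fun x => x - a := by
    have hc : Tendsto (fun x : ℂ => (x - a) ^ m) (𝓝[circleT] a) (𝓝 ((a - a) ^ m)) :=
      (Continuous.tendsto (by fun_prop) a).mono_left nhdsWithin_le_nhds
    simpa [pow_succ] using (hc.isBigO_one ℂ).mul (Asymptotics.isBigO_refl (fun x => x - a) _)
  have h1 : HasDerivWithinAt (fun x => h x - p.eval (x - a)) 0 circleT a := by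
    rw [hasDerivWithinAt_iff_isLittleO]
    simpa [h0, ← Polynomial.coeff_zero_eq_eval_zero] using hp.trans_isBigO hO
  have h2 := h1.fun_add (poly_hasDeriv p a a).hasDerivWithinAt
  simpa [← Polynomial.coeff_zero_eq_eval_zero, Polynomial.coeff_derivative] using h2

lemma TaylorAt.differentiable {a : ℂ} (ha : a ∈ circleT) {m : ℕ} {h : ℂ → ℂ}
    (hT : TaylorAt a (m + 1) h) : DifferentiableWithinAt ℂ h circleT a := by
  obtain ⟨p, hp⟩ := hT
  exact (value_and_deriv ha hp).2.differentiableWithinAt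

/-- Dividing out `x - a` shifts the Taylor expansion at `a` by one order. -/
lemma TaylorAt.step {a : ℂ} (ha : a ∈ circleT) {m : ℕ} {h : ℂ → ℂ}
    (hT : TaylorAt a (m + 1) h) : TaylorAt a m (step h a) := by
  obtain ⟨p, hp⟩ := hT
  obtain ⟨h0, h1⟩ := value_and_deriv ha hp
  refine ⟨p.divX, ?_⟩
  rw [Asymptotics.isLittleO_iff]
  intro c hc
  filter_upwards [hp.def hc] with x hx
  by_cases hxa : x = a
  · subst hxa
    rw [step_self, cderiv_eq ha h1, sub_self, ← Polynomial.coeff_zero_eq_eval_zero,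
      Polynomial.coeff_divX, zero_add, sub_self, norm_zero]
    positivity
  · have hne : x - a ≠ 0 := sub_ne_zero.mpr hxa
    have hev : p.eval (x - a) = (x - a) * p.divX.eval (x - a) + h a := by
      have := congrArg (Polynomial.eval (x - a)) (Polynomial.X_mul_divX_add p)
      rw [Polynomial.eval_add, Polynomial.eval_mul, Polynomial.eval_X, Polynomial.eval_C] at this
      rw [h0, this]
    have h2 : h x - p.eval (x - a) = (_root_.step h a x - p.divX.eval (x - a)) * (x - a) := by
      rw [step_of_ne _ hxa, hev]
      field_simp
      ring
    rw [h2, pow_succ, norm_mul, norm_mul, ← mul_assoc] at hx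
    exact le_of_mul_le_mul_right hx (norm_pos_iff.mpr hne)

/-- Integration of a little-o estimate along the circle. The chord `‖x - a‖` and the arc `|θ|`
from `a` to `x = a * exp (i θ)` satisfy `‖x - a‖ ≤ |θ| ≤ π / 2 * ‖x - a‖`, so the mean value
inequality along the arc loses a constant factor only. -/
lemma isLittleO_of_deriv {a : ℂ} (ha : a ∈ circleT) {m : ℕ} {g g' : ℂ → ℂ} (hga : g a = 0)
    (hd : ∀ x ∈ circleT, HasDerivWithinAt g (g' x) circleT x)
    (hg' : g' =o[𝓝[circleT] a] fun x => (x - a) ^ m) :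
    g =o[𝓝[circleT] a] fun x => (x - a) ^ (m + 1) := by
  have hpi := Real.pi_pos
  rw [Asymptotics.isLittleO_iff]
  intro c hc
  set K : ℝ := (Real.pi / 2) ^ (m + 1) with hK
  have hKpos : 0 < K := by positivity
  have hev := hg'.def (div_pos hc hKpos)
  rw [eventually_nhdsWithin_iff, Metric.eventually_nhds_iff] at hev
  obtain ⟨δ, hδ, hev⟩ := hev
  have hnear : ∀ᶠ x in 𝓝[circleT] a, Real.pi / 2 * ‖x - a‖ < δ := by
    have hc : Tendsto (fun x : ℂ => Real.pi / 2 * ‖x - a‖) (𝓝[circleT] a)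
        (𝓝 (Real.pi / 2 * ‖a - a‖)) :=
      (Continuous.tendsto (by fun_prop) a).mono_left nhdsWithin_le_nhds
    exact hc.eventually_lt_const (by simpa using hδ)
  filter_upwards [hnear, self_mem_nhdsWithin] with x hx hxT
  have ha0 := ne_zero_of_mem ha
  set θ : ℝ := (x / a).arg with hθ
  have hθle : |θ| ≤ Real.pi / 2 * ‖x - a‖ := by
    rw [hθ, ← Complex.angle_eq_abs_arg (ne_zero_of_mem hxT) ha0]
    exact Complex.angle_le_mul_norm_sub hxT ha
  set φ : ℝ → ℂ := fun t => a * Complex.exp (Complex.I * t) with hφ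
  have hφT : ∀ t, φ t ∈ circleT := fun t => by
    change ‖φ t‖ = 1
    rw [hφ]
    simp [norm_of_mem ha, mul_comm Complex.I, Complex.norm_exp_ofReal_mul_I]
  have hφ0 : φ 0 = a := by simp [hφ]
  have hφθ : φ θ = x := by
    have h1 : ‖x / a‖ = 1 := by simp [norm_of_mem ha, norm_of_mem hxT]
    have := Complex.norm_mul_exp_arg_mul_I (x / a)
    rw [h1, Complex.ofReal_one, one_mul] at this
    simp only [hφ]
    rw [mul_comm Complex.I, this]
    field_simp
  have hφd : ∀ t : ℝ, HasDerivAt φ (a * (Complex.exp (Complex.I * t) * Complex.I)) t := fun t => by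
    have h1 : HasDerivAt (fun t : ℝ => Complex.I * (t : ℂ)) Complex.I t := by
      simpa using (Complex.ofRealCLM.hasDerivAt (x := t)).const_mul Complex.I
    exact h1.cexp.const_mul a
  have hchord : ∀ t, ‖φ t - a‖ ≤ |t| := fun t => by
    have h1 : φ t - a = a * (Complex.exp (Complex.I * t) - 1) := by simp only [hφ]; ring
    rw [h1, norm_mul, norm_of_mem ha, one_mul]
    exact Real.norm_exp_I_mul_ofReal_sub_one_le
  have hmv := Convex.norm_image_sub_le_of_norm_hasDerivWithin_le
    (f := g ∘ φ) (f' := fun t => (a * (Complex.exp (Complex.I * t) * Complex.I)) • g' (φ t))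
    (s := Set.uIcc 0 θ) (x := 0) (y := θ) (C := c / K * |θ| ^ m)
    (fun t _ => ((hd (φ t) (hφT t)).scomp_hasDerivAt t (hφd t) hφT).hasDerivWithinAt)
    (fun t ht => by
      have ht' : |t| ≤ |θ| := by
        simpa using Set.abs_sub_left_of_mem_uIcc ht
      have h1 : ‖a * (Complex.exp (Complex.I * t) * Complex.I)‖ = 1 := by
        simp [norm_of_mem ha, mul_comm Complex.I, Complex.norm_exp_ofReal_mul_I]
      rw [norm_smul, h1, one_mul]
      have h2 := hev (y := φ t)
        (by rw [dist_eq_norm]; exact ((hchord t).trans (ht'.trans hθle)).trans_lt hx) (hφT t)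
      refine h2.trans ?_
      rw [norm_pow]
      gcongr
      exact (hchord t).trans ht')
    (convex_uIcc 0 θ) Set.left_mem_uIcc Set.right_mem_uIcc
  simp only [Function.comp, hφ0, hφθ, hga, sub_zero, Real.norm_eq_abs] at hmv
  calc ‖g x‖ ≤ c / K * |θ| ^ m * |θ| := hmv
    _ = c / K * |θ| ^ (m + 1) := by ring
    _ ≤ c / K * (Real.pi / 2 * ‖x - a‖) ^ (m + 1) := by gcongr
    _ = c * ‖(x - a) ^ (m + 1)‖ := by
      rw [mul_pow, ← hK, norm_pow]
      field_simp

lemma exists_antideriv (p : Polynomial ℂ) (c : ℂ) :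
    ∃ q : Polynomial ℂ, q.derivative = p ∧ q.coeff 0 = c := by
  have h : ∃ q : Polynomial ℂ, q.derivative = p := by
    induction p using Polynomial.induction_on' with
    | add p q hp hq =>
      obtain ⟨P, rfl⟩ := hp
      obtain ⟨Q, rfl⟩ := hq
      exact ⟨P + Q, by simp⟩
    | monomial n r =>
      refine ⟨Polynomial.monomial (n + 1) (r / (n + 1)), ?_⟩
      have : (n : ℂ) + 1 ≠ 0 := Nat.cast_add_one_ne_zero n
      rw [Polynomial.derivative_monomial]
      simp [this]
  obtain ⟨q, hq⟩ := h
  exact ⟨q - Polynomial.C (q.coeff 0) + Polynomial.C c, by simp [hq], by simp⟩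

lemma CircleDiffOn.differentiable {n : ℕ} {f : ℂ → ℂ} (hf : CircleDiffOn (n + 1) f) :
    DifferentiableOn ℂ f circleT := fun z hz => hf 0 (Nat.succ_pos n) z hz

lemma CircleDiffOn.cderiv {n : ℕ} {f : ℂ → ℂ} (hf : CircleDiffOn (n + 1) f) :
    CircleDiffOn n (cderiv f) := fun k hk z hz => hf (k + 1) (by lia) z hz

/-- Taylor's theorem with Peano remainder: only differentiability of the `n`-th derivative at each
point is needed, not its continuity. -/
lemma CircleDiffOn.taylorAt {a : ℂ} (ha : a ∈ circleT) (n : ℕ) (f : ℂ → ℂ)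
    (hf : CircleDiffOn (n + 1) f) : TaylorAt a (n + 1) f := by
  induction n generalizing f with
  | zero =>
    refine ⟨Polynomial.C (f a) + Polynomial.X * Polynomial.C (derivWithin f circleT a), ?_⟩
    have := (hf.differentiable a ha).hasDerivWithinAt.isLittleO
    simp only [Polynomial.eval_add, Polynomial.eval_mul, Polynomial.eval_C, Polynomial.eval_X,
      zero_add, pow_one]
    simpa only [sub_sub, smul_eq_mul] using this
  | succ n ih =>
    obtain ⟨p, hp⟩ := ih _ hf.cderiv
    obtain ⟨q, hq, hq0⟩ := exists_antideriv p (f a)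
    refine ⟨q, isLittleO_of_deriv ha ?_ (fun x hx => ?_) hp⟩
    · simp [← Polynomial.coeff_zero_eq_eval_zero, hq0]
    · rw [← hq]
      exact (hf.differentiable x hx).hasDerivWithinAt.sub (poly_hasDeriv q a x).hasDerivWithinAt

lemma taylorAt_dd_replicate {a : ℂ} (ha : a ∈ circleT) {f : ℂ → ℂ} (k m : ℕ)
    (hf : TaylorAt a (m + k) f) : TaylorAt a m (dd f (List.replicate k a)) := by
  induction k generalizing m with
  | zero => exact hf
  | succ k ih => exact (ih (m + 1) (by convert hf using 1; ring)).step ha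

/-! ### Differentiability and symmetry -/

/-- A divided difference of order less than `n` is differentiable in its first variable. At a point
`a`, either all other variables equal `a`, and the Taylor expansion of `f` at `a` applies, or one of
them, `c ≠ a`, can be moved to the front, giving a quotient whose denominator `x - c` does not
vanish at `a`. -/
lemma dd_differentiable {n : ℕ} {f : ℂ → ℂ} (hf : CircleDiffOn n f) (k : ℕ) :
    ∀ l : List ℂ, l.length = k → k + 1 ≤ n → (∀ y ∈ l, y ∈ circleT) →
      DifferentiableOn ℂ (dd f l) circleT := by
  induction k using Nat.strong_induction_on with
  | _ k ih =>
  intro l hlk hkn hT a ha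
  by_cases hall : ∀ y ∈ l, y = a
  · rw [List.eq_replicate_of_mem hall, hlk]
    have hf' : CircleDiffOn (k + 1) f := fun j hj z hz => hf j (by lia) z hz
    refine TaylorAt.differentiable (m := 0) ha (taylorAt_dd_replicate ha k (0 + 1) ?_)
    convert hf'.taylorAt ha k f using 1
    ring
  · push Not at hall
    obtain ⟨c, hcl, hca⟩ := hall
    have hp := List.perm_cons_erase hcl
    have hlen : (l.erase c).length + 1 = k := by rw [← hlk, hp.length_eq, List.length_cons]
    have heq : Set.EqOn (dd f l) (dd f (c :: l.erase c)) circleT :=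
      dd_perm (N := k) (fun m hm hmT => ih m.length (by lia) m rfl (by lia) hmT) hp hlk.le hT
    have hd := ih (l.erase c).length (by lia) (l.erase c) rfl (by lia)
      (fun y hy => hT y (List.mem_of_mem_erase hy)) a ha
    exact (step_hasDeriv hd.hasDerivWithinAt hca.symm).differentiableWithinAt.congr heq (heq ha)

/-- Full symmetry. The symmetry of the first divided difference exchanges the first two variables,
which together with the permutations of the remaining variables generates all permutations. -/
lemma dd_symm {n : ℕ} {f : ℂ → ℂ} (hf : CircleDiffOn n f) {x x' : ℂ} {l l' : List ℂ}
    (hp : (x :: l).Perm (x' :: l')) (hl : l.length ≤ n) (hT : ∀ y ∈ x :: l, y ∈ circleT) :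
    dd f l x = dd f l' x' := by
  have hD : ∀ m : List ℂ, m.length + 2 ≤ n → (∀ y ∈ m, y ∈ circleT) →
      DifferentiableOn ℂ (dd f m) circleT :=
    fun m hm hmT => dd_differentiable hf m.length m rfl (by lia) hmT
  have hx : x ∈ circleT := hT x (by simp)
  have hlT : ∀ y ∈ l, y ∈ circleT := fun y hy => hT y (by simp [hy])
  have hx' : x' ∈ circleT := hT x' (hp.mem_iff.mpr (by simp))
  by_cases hxx : x = x'
  · subst hxx
    exact dd_perm hD hp.cons_inv hl hlT hx
  · have hmem : x' ∈ l := by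
      have : x' ∈ x :: l := hp.mem_iff.mpr (by simp)
      simpa [Ne.symm hxx] using this
    have h1 := List.perm_cons_erase hmem
    have h2 : (x :: l.erase x').Perm l' := by
      have h3 : (x' :: x :: l.erase x').Perm (x' :: l') :=
        (List.Perm.swap _ _ _).trans ((h1.symm.cons x).trans hp)
      exact h3.cons_inv
    have hlen := h1.length_eq
    simp only [List.length_cons] at hlen
    calc dd f l x = dd f (x' :: l.erase x') x := dd_perm hD h1 hl hlT hx
      _ = dd f (x :: l.erase x') x' := step_comm _ _ _
      _ = dd f l' x' := dd_perm hD h2 (by simp only [List.length_cons]; lia)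
          (fun y hy => by
            rcases List.mem_cons.mp hy with rfl | hy
            · exact hx
            · exact hlT y (List.mem_of_mem_erase hy)) hx'

/- STATEMENT 6: The n-th divided difference f^{[n]} is a symmetric function of
its n+1 variables on 𝕋^{n+1}. -/

theorem stmt6 (n : ℕ) (hn : 1 ≤ n) (f : ℂ → ℂ) (hf : CircleDiffOn n f)
    (σ : Equiv.Perm (Fin (n + 1))) (v : Fin (n + 1) → ℂ) (hv : ∀ i, v i ∈ circleT) :
    divDiff f n (fun i => v (σ i)) = divDiff f n v := by
  rw [divDiff_eq_dd, divDiff_eq_dd]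
  refine dd_symm hf ?_ (by simp) ?_
  · rw [← List.ofFn_succ (f := fun i => v (σ i)), ← List.ofFn_succ (f := v)]
    exact Equiv.Perm.ofFn_comp_perm σ v
  · rw [← List.ofFn_succ (f := fun i => v (σ i))]
    intro y hy
    obtain ⟨i, rfl⟩ := (List.mem_ofFn' _ _).mp hy
    exact hv _
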